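/- (Intermediate claim from the sufficiency proof of Theorem 2.) For every n ≥ 1, every layer i and all vertices v, w adjacent in layer i: if alive n i v w holds and alive (n−1) i w v holds (the reverse stub is alive one level lower), then w ∈ S_n. -/

import Mathlib

/-- The pruning operator: keep the vertices of `S` that have, in every layer `i`,
at least `k i` neighbors (in layer `i`) inside `S`. -/
def prune {V : Type*} {R : ℕ} (G : Fin R → SimpleGraph V) [∀ i, DecidableRel (G i).Adj]
    (k : Fin R → ℕ) (S : Set V) : Set V :=
  {v | v ∈ S ∧ ∀ i : Fin R, k i ≤ Nat.card {w : V // (G i).Adj v w ∧ w ∈ S}}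

/-- The pruning sequence: `S_0` is the set of all vertices, `S_{n+1} = P (S_n)`. -/
def pruneSeq {V : Type*} {R : ℕ} (G : Fin R → SimpleGraph V) [∀ i, DecidableRel (G i).Adj]
    (k : Fin R → ℕ) : ℕ → Set V
  | 0 => Set.univ
  | n + 1 => prune G k (pruneSeq G k n)

/-- Aliveness of the stub `(e_{[i]}, w)`, where `e_{[i]}` is the layer-`i` edge from `v` to `w`:
`alive 0 i v w` holds whenever `v, w` are adjacent in layer `i`, and `alive (n+1) i v w` holds
iff `v, w` are adjacent in layer `i` and for every layer `l`, the number of vertices `u`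
adjacent to `w` in layer `l` with `(l, u) ≠ (i, v)` such that `alive n l w u` holds is at
least `k l - 1` if `l = i` and at least `k l` otherwise. -/
def alive {V : Type*} {R : ℕ} (G : Fin R → SimpleGraph V) [∀ i, DecidableRel (G i).Adj]
    (k : Fin R → ℕ) : ℕ → Fin R → V → V → Prop
  | 0, i, v, w => (G i).Adj v w
  | n + 1, i, v, w => (G i).Adj v w ∧ ∀ l : Fin R,
      (if l = i then k l - 1 else k l) ≤
        Nat.card {u : V // (G l).Adj w u ∧ (l, u) ≠ (i, v) ∧ alive G k n l w u}

section AliveStubs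

variable {V : Type*} {R : ℕ} {G : Fin R → SimpleGraph V} [∀ i, DecidableRel (G i).Adj]
  {k : Fin R → ℕ}

theorem alive.adj {n : ℕ} {i : Fin R} {v w : V} (h : alive G k n i v w) : (G i).Adj v w := by
  cases n with
  | zero => exact h
  | succ n => exact h.1

/-- In a finite type, weakening a predicate does not decrease the number of its witnesses. -/
theorem Nat.card_subtype_mono [Finite V] {p q : V → Prop} (h : ∀ u, p u → q u) :
    Nat.card {u // p u} ≤ Nat.card {u // q u} :=
  Nat.card_le_card_of_injective _ (Subtype.map_injective h Function.injective_id)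

/-- Excluding one element decreases the number of witnesses by at most one. -/
theorem Nat.card_subtype_le_card_ne_add_one [Finite V] (p : V → Prop) (a : V) :
    Nat.card {u // p u} ≤ Nat.card {u // u ≠ a ∧ p u} + 1 := by
  have h := Set.ncard_le_ncard_sdiff_add_ncard {u | p u} {a}
  rw [Set.ncard_singleton] at h
  refine h.trans (Nat.add_le_add_right ?_ 1)
  exact Nat.card_subtype_mono (p := fun u => u ∈ {u | p u} \ {a}) fun u hu => ⟨hu.2, hu.1⟩

/-- An additional witness increases the number of witnesses by at least one. -/
theorem Nat.card_ne_add_one_le_card_subtype [Finite V] {p : V → Prop} {a : V} (ha : p a) :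
    Nat.card {u // u ≠ a ∧ p u} + 1 ≤ Nat.card {u // p u} := by
  have h := Set.ncard_sdiff_singleton_add_one (s := {u | p u}) (a := a) ha
  refine le_trans (Nat.add_le_add_right ?_ 1) h.le
  exact Nat.card_subtype_mono (q := fun u => u ∈ {u | p u} \ {a}) fun u hu => ⟨hu.2, hu.1⟩

variable [Finite V]

theorem alive.of_succ {n : ℕ} {i : Fin R} {v w : V} (h : alive G k (n + 1) i v w) :
    alive G k n i v w := by
  induction n generalizing i v w with
  | zero => exact h.1
  | succ n ih =>
    exact ⟨h.1, fun l => (h.2 l).trans <|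
      Nat.card_subtype_mono fun u hu => ⟨hu.1, hu.2.1, ih hu.2.2⟩⟩

/-- If a vertex has enough alive stubs in every layer, then every stub pointing to it is alive
one level higher. -/
theorem alive_succ_of_le_card {n : ℕ} {w : V}
    (h : ∀ l, k l ≤ Nat.card {u // alive G k n l w u}) {i : Fin R} {v : V}
    (hadj : (G i).Adj v w) : alive G k (n + 1) i v w := by
  refine ⟨hadj, fun l => ?_⟩
  split_ifs with hl
  · subst hl
    have := Nat.card_subtype_le_card_ne_add_one (fun u => alive G k n l w u) v
    refine le_trans (Nat.sub_le_iff_le_add.2 ((h l).trans this)) ?_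
    exact Nat.card_subtype_mono fun u hu =>
      ⟨hu.2.adj, fun e => hu.1 (Prod.ext_iff.1 e).2, hu.2⟩
  · exact (h l).trans <| Nat.card_subtype_mono fun u hu =>
      ⟨hu.adj, fun e => hl (Prod.ext_iff.1 e).1, hu⟩

/-- If both stubs of an edge are alive, with the reverse one a level lower, then the end vertex
has enough alive stubs in every layer. -/
theorem le_card_of_alive_succ {n : ℕ} {i : Fin R} {v w : V}
    (h₁ : alive G k (n + 1) i v w) (h₂ : alive G k n i w v) (l : Fin R) :
    k l ≤ Nat.card {u // alive G k n l w u} := by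
  have h := h₁.2 l
  split_ifs at h with hl
  · subst hl
    refine (Nat.sub_le_iff_le_add.1 h).trans (le_trans (Nat.add_le_add_right ?_ 1)
      (Nat.card_ne_add_one_le_card_subtype (p := fun u => alive G k n l w u) h₂))
    exact Nat.card_subtype_mono fun u hu => ⟨fun e => hu.2.1 (by rw [e]), hu.2.2⟩
  · exact h.trans <| Nat.card_subtype_mono fun u hu => hu.2.2

/-- A vertex with enough stubs alive at level `n` in every layer survives `n + 1` prunings. -/
theorem mem_pruneSeq_succ_of_le_card {n : ℕ} {w : V}
    (h : ∀ l, k l ≤ Nat.card {u // alive G k n l w u}) : w ∈ pruneSeq G k (n + 1) := by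
  induction n generalizing w with
  | zero =>
    exact ⟨Set.mem_univ w, fun l => (h l).trans <|
      Nat.card_subtype_mono fun u hu => ⟨hu.adj, Set.mem_univ u⟩⟩
  | succ n ih =>
    have h' : ∀ l, k l ≤ Nat.card {u // alive G k n l w u} := fun l =>
      (h l).trans <| Nat.card_subtype_mono fun u hu => hu.of_succ
    exact ⟨ih h', fun l => (h l).trans <| Nat.card_subtype_mono fun u hu => ⟨hu.adj,
      ih (le_card_of_alive_succ hu (alive_succ_of_le_card h' hu.adj.symm).of_succ)⟩⟩

end AliveStubs

/-- Intermediate claim from the sufficiency proof of Theorem 2: for `n ≥ 1` and `v, w`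
adjacent in layer `i`, if `alive n i v w` holds and the reverse stub is alive one level
lower (`alive (n-1) i w v`), then `w` survives the `n`-th pruning. -/
theorem mem_pruneSeq_of_alive_stub {V : Type*} [Fintype V] {R : ℕ}
    (G : Fin R → SimpleGraph V) [∀ i, DecidableRel (G i).Adj] (k : Fin R → ℕ)
    (n : ℕ) (hn : 1 ≤ n) (i : Fin R) (v w : V) (hadj : (G i).Adj v w)
    (h1 : alive G k n i v w) (h2 : alive G k (n - 1) i w v) :
    w ∈ pruneSeq G k n := by
  obtain ⟨m, rfl⟩ := Nat.exists_eq_add_of_le' hn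
  exact mem_pruneSeq_succ_of_le_card (le_card_of_alive_succ h1 h2)
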